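/- arXiv:0806.2411 — 3 statements merged into one kernel-verified Lean document; each statement's English description precedes it below -/
import Mathlib

section
/- Let p : (0,∞) → ℝ be C² with p′ < 0 and p″ > 0, let 0 < v₊ < v₋, let a = −(v₊ − v₋)/(p(v₊) − p(v₋)), and let d > 0. Then there exists a nonconstant C² function v̂ : ℝ → (0,∞) satisfying v̂ − v₋ + a(p(v̂) − p(v₋)) = v̂′/v̂ − d v̂″ on all of ℝ, with v̂(x) → v₋ as x → −∞, v̂(x) → v₊ as x → +∞, and v̂′(x) → 0 as x → ±∞. That is, a shock profile (heteroclinic connection from v₋ to v₊) exists. -/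
open Filter Topology Set
open scoped NNReal

section GlobalFlow

variable {E : Type*} [NormedAddCommGroup E] [NormedSpace ℝ E]

theorem exists_hasDerivAt_Ioo_of_lipschitz_of_bounded [CompleteSpace E] {G : E → E} {K M : ℝ≥0}
    (hG : LipschitzWith K G) (hM : ∀ z, ‖G z‖ ≤ M) (z : E) {T : ℝ} (hT : 0 < T) :
    ∃ w : ℝ → E, w 0 = z ∧ ∀ t ∈ Ioo (-T) T, HasDerivAt w (G (w t)) t := by
  have hpl : IsPicardLindelof (fun _ ↦ G) (⟨0, by constructor <;> linarith⟩ : Icc (-T) T) z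
      (M * T.toNNReal) 0 M K := by
    refine .of_time_independent (fun x _ ↦ hM x) hG.lipschitzOnWith ?_
    simp [hT.le]
  obtain ⟨w, h0, hw⟩ := hpl.exists_eq_forall_mem_Icc_hasDerivWithinAt₀
  exact ⟨w, h0, fun t ht ↦ (hw t (Ioo_subset_Icc_self ht)).hasDerivAt (Icc_mem_nhds ht.1 ht.2)⟩

theorem norm_le_gronwallBound_of_hasDerivAt_Ioo {w w' : ℝ → E} {T K ε : ℝ} (hK : 0 ≤ K)
    (hε : 0 ≤ ε) (hw : ∀ t ∈ Ioo (-T) T, HasDerivAt w (w' t) t)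
    (hb : ∀ t ∈ Ioo (-T) T, ‖w' t‖ ≤ K * ‖w t‖ + ε) :
    ∀ t ∈ Ioo (-T) T, ‖w t‖ ≤ gronwallBound ‖w 0‖ K ε T := by
  have key : ∀ (f f' : ℝ → E), (∀ t ∈ Ioo (-T) T, HasDerivAt f (f' t) t) →
      (∀ t ∈ Ioo (-T) T, ‖f' t‖ ≤ K * ‖f t‖ + ε) → ∀ t ∈ Ico 0 T,
      ‖f t‖ ≤ gronwallBound ‖f 0‖ K ε T := by
    intro f f' hf hf' t ht
    have hsub : ∀ s ∈ Icc 0 t, s ∈ Ioo (-T) T := fun s hs ↦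
      ⟨by linarith [hs.1, ht.1, ht.2], by linarith [hs.2, ht.2]⟩
    have := norm_le_gronwallBound_of_norm_deriv_right_le
      (HasDerivAt.continuousOn fun s hs ↦ hf s (hsub s hs))
      (fun s hs ↦ (hf s (hsub s (Ico_subset_Icc_self hs))).hasDerivWithinAt) le_rfl
      (fun s hs ↦ hf' s (hsub s (Ico_subset_Icc_self hs))) t ⟨ht.1, le_rfl⟩
    exact this.trans (gronwallBound_mono (norm_nonneg _) hε hK (by linarith [ht.2]))
  intro t ht
  rcases le_total 0 t with h | h
  · exact key w w' hw hb t ⟨h, ht.2⟩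
  · have hneg : ∀ s ∈ Ioo (-T) T, -s ∈ Ioo (-T) T := fun s hs ↦
      ⟨by linarith [hs.2], by linarith [hs.1]⟩
    have := key (fun s ↦ w (-s)) (fun s ↦ -w' (-s))
      (fun s hs ↦ by simpa [Function.comp_def] using (hw _ (hneg s hs)).scomp s (hasDerivAt_neg s))
      (fun s hs ↦ by simpa using hb _ (hneg s hs)) (-t) ⟨by linarith, by linarith [ht.1]⟩
    simpa using this

theorem exists_hasDerivAt_of_forall_Ioo {G : E → E} {K : ℝ≥0} (hG : LipschitzWith K G) (z : E)
    (h : ∀ T > 0, ∃ w : ℝ → E, w 0 = z ∧ ∀ t ∈ Ioo (-T) T, HasDerivAt w (G (w t)) t) :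
    ∃ w : ℝ → E, w 0 = z ∧ ∀ t, HasDerivAt w (G (w t)) t := by
  choose! w h0 hw using h
  have agree : ∀ S T : ℝ, 0 < S → S ≤ T → EqOn (w S) (w T) (Ioo (-S) S) := fun S T hS hST ↦
    ODE_solution_unique_of_mem_Ioo (v := fun _ ↦ G) (s := fun _ ↦ univ) (K := K) (t₀ := 0)
      (fun _ _ ↦ hG.lipschitzOnWith) ⟨by linarith, hS⟩ (fun t ht ↦ ⟨hw S hS t ht, trivial⟩)
      (fun t ht ↦ ⟨hw T (hS.trans_le hST) t (Ioo_subset_Ioo (by linarith) hST ht), trivial⟩)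
      (by rw [h0 S hS, h0 T (hS.trans_le hST)])
  have eqOn : ∀ T > 0, EqOn (fun t ↦ w (|t| + 1) t) (w T) (Ioo (-T) T) := by
    intro T hT t ht
    have h1 : t ∈ Ioo (-(|t| + 1)) (|t| + 1) := abs_lt.mp (lt_add_one _)
    rcases le_total (|t| + 1) T with h | h
    · exact agree _ _ (by positivity) h h1
    · exact (agree _ _ hT h ht).symm
  refine ⟨fun t ↦ w (|t| + 1) t, by simp [h0], fun t ↦ ?_⟩
  have h1 : t ∈ Ioo (-(|t| + 1)) (|t| + 1) := abs_lt.mp (lt_add_one _)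
  refine (hw (|t| + 1) (by positivity) t h1).congr_of_eventuallyEq ?_
  filter_upwards [Ioo_mem_nhds h1.1 h1.2] with s hs using eqOn _ (by positivity) hs

theorem dist_le_mul_exp_of_hasDerivAt {G : E → E} {K : ℝ≥0} (hG : LipschitzWith K G)
    {f g : ℝ → E} (hf : ∀ t, HasDerivAt f (G (f t)) t) (hg : ∀ t, HasDerivAt g (G (g t)) t)
    (t : ℝ) : dist (f t) (g t) ≤ dist (f 0) (g 0) * Real.exp (K * |t|) := by
  have key : ∀ {G : E → E} (_ : LipschitzWith K G) {f g : ℝ → E}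
      (_ : ∀ t, HasDerivAt f (G (f t)) t) (_ : ∀ t, HasDerivAt g (G (g t)) t) (t : ℝ), 0 ≤ t →
      dist (f t) (g t) ≤ dist (f 0) (g 0) * Real.exp (K * t) := by
    intro G hG f g hf hg t ht
    have := dist_le_of_trajectories_ODE (v := fun _ ↦ G) (a := 0) (b := t) (fun _ ↦ hG)
      (HasDerivAt.continuousOn fun s _ ↦ hf s) (fun s _ ↦ (hf s).hasDerivWithinAt)
      (HasDerivAt.continuousOn fun s _ ↦ hg s) (fun s _ ↦ (hg s).hasDerivWithinAt) le_rfl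
      t ⟨ht, le_rfl⟩
    simpa using this
  rcases le_total 0 t with h | h
  · simpa [abs_of_nonneg h] using key hG hf hg t h
  · have := key (G := fun z ↦ -G z) hG.neg (f := fun s ↦ f (-s)) (g := fun s ↦ g (-s))
      (fun s ↦ by simpa [Function.comp_def] using (hf (-s)).scomp s (hasDerivAt_neg s))
      (fun s ↦ by simpa [Function.comp_def] using (hg (-s)).scomp s (hasDerivAt_neg s)) (-t) (by linarith)
    simpa [abs_of_nonpos h] using this

end GlobalFlow

/-- Coordinatewise truncation of the plane to the square `[-R, R] × [-R, R]`. -/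
def planeClamp (R : ℝ) (z : ℝ × ℝ) : ℝ × ℝ := (max (-R) (min z.1 R), max (-R) (min z.2 R))

theorem lipschitzWith_planeClamp (R : ℝ) : LipschitzWith 1 (planeClamp R) := by
  have h1 := (LipschitzWith.prod_fst.min_const R).const_max (α := ℝ × ℝ) (-R)
  have h2 := (LipschitzWith.prod_snd.min_const R).const_max (α := ℝ × ℝ) (-R)
  exact (max_self (1 : ℝ≥0)) ▸ h1.prodMk h2

theorem norm_planeClamp_le {R : ℝ} (hR : 0 ≤ R) (z : ℝ × ℝ) : ‖planeClamp R z‖ ≤ R := by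
  simp only [planeClamp, Prod.norm_def, Real.norm_eq_abs, sup_le_iff, abs_le]
  grind

theorem norm_planeClamp_le_norm {R : ℝ} (hR : 0 ≤ R) (z : ℝ × ℝ) : ‖planeClamp R z‖ ≤ ‖z‖ := by
  have key : ∀ x : ℝ, |max (-R) (min x R)| ≤ |x| := fun x ↦ by
    rw [abs_le]
    rcases abs_cases x with h | h <;> grind
  exact sup_le_sup (key z.1) (key z.2)

theorem planeClamp_of_norm_le {R : ℝ} {z : ℝ × ℝ} (hz : ‖z‖ ≤ R) : planeClamp R z = z := by
  simp only [Prod.norm_def, Real.norm_eq_abs, sup_le_iff, abs_le] at hz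
  ext <;> simp only [planeClamp] <;> grind

theorem exists_hasDerivAt_of_lipschitz {G : ℝ × ℝ → ℝ × ℝ} {K : ℝ≥0} (hG : LipschitzWith K G)
    (z : ℝ × ℝ) : ∃ w : ℝ → ℝ × ℝ, w 0 = z ∧ ∀ t, HasDerivAt w (G (w t)) t := by
  refine exists_hasDerivAt_of_forall_Ioo hG z fun T hT ↦ ?_
  have hlin : ∀ x, ‖G x‖ ≤ K * ‖x‖ + ‖G 0‖ := by
    intro x
    have h1 := hG.dist_le_mul x 0
    rw [dist_zero_right, dist_eq_norm] at h1
    linarith [norm_le_norm_add_norm_sub' (G x) (G 0)]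
  set R : ℝ := gronwallBound ‖z‖ K ‖G 0‖ T with hRdef
  have hR : 0 ≤ R := (norm_nonneg z).trans <| by
    have := gronwallBound_mono (norm_nonneg z) (norm_nonneg (G 0)) K.coe_nonneg hT.le
    rwa [gronwallBound_x0] at this
  have hlip : LipschitzWith K (G ∘ planeClamp R) := by
    simpa using hG.comp (lipschitzWith_planeClamp R)
  obtain ⟨w, h0, hw⟩ := exists_hasDerivAt_Ioo_of_lipschitz_of_bounded hlip
    (M := K * R.toNNReal + ‖G 0‖₊) (fun x ↦ by
      simp only [NNReal.coe_add, NNReal.coe_mul, Real.coe_toNNReal _ hR, coe_nnnorm]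
      exact (hlin (planeClamp R x)).trans (by gcongr; exact norm_planeClamp_le hR x)) z hT
  have hbd := norm_le_gronwallBound_of_hasDerivAt_Ioo K.coe_nonneg (norm_nonneg (G 0)) hw
    (fun t _ ↦ (hlin _).trans (by
      have := mul_le_mul_of_nonneg_left (norm_planeClamp_le_norm hR (w t)) K.coe_nonneg
      linarith))
  refine ⟨w, h0, fun t ht ↦ ?_⟩
  have h1 := hbd t ht
  rw [h0, ← hRdef] at h1
  simpa only [Function.comp_apply, planeClamp_of_norm_le h1] using hw t ht

/-- A Lipschitz vector field on the plane generates a global continuous flow. -/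
theorem exists_flow_of_lipschitz {G : ℝ × ℝ → ℝ × ℝ} {K : ℝ≥0} (hG : LipschitzWith K G) :
    ∃ φ : ℝ × ℝ → ℝ → ℝ × ℝ, (∀ z, φ z 0 = z) ∧ (∀ z t, HasDerivAt (φ z) (G (φ z t)) t) ∧
      (∀ z s t, φ z (s + t) = φ (φ z s) t) ∧ (∀ t, Continuous fun z ↦ φ z t) ∧
      ∀ z, G z = 0 → ∀ t, φ z t = z := by
  choose φ h0 hφ using exists_hasDerivAt_of_lipschitz hG
  have uniq : ∀ {f g : ℝ → ℝ × ℝ}, (∀ t, HasDerivAt f (G (f t)) t) →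
      (∀ t, HasDerivAt g (G (g t)) t) → f 0 = g 0 → ∀ t, f t = g t := by
    intro f g hf hg h t
    have := dist_le_mul_exp_of_hasDerivAt hG hf hg t
    rw [h, dist_self, zero_mul] at this
    exact dist_le_zero.mp this
  refine ⟨φ, h0, hφ, fun z s t ↦ ?_, fun t ↦ ?_, fun z hz t ↦ ?_⟩
  · refine uniq (f := fun t ↦ φ z (s + t)) (fun t ↦ (hφ z (s + t)).comp_const_add s t)
      (hφ (φ z s)) (by simp [h0]) t
  · refine (LipschitzWith.of_dist_le_mul (K := (Real.exp (K * |t|)).toNNReal) fun z z' ↦ ?_).continuous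
    have := dist_le_mul_exp_of_hasDerivAt hG (hφ z) (hφ z') t
    rw [h0, h0, mul_comm] at this
    rwa [Real.coe_toNNReal _ (Real.exp_pos _).le]
  · exact uniq (hφ z) (g := fun _ ↦ z) (fun t ↦ by simpa [hz] using hasDerivAt_const t z)
      (h0 z) t

/-- **LaSalle's principle** for an orbit in a compact set, in a form covering both time directions. -/
theorem tendsto_of_lyapunov_const {X : Type*} [TopologicalSpace X] {φ : X → ℝ → X} {C : Set X}
    {V : X → ℝ} {l : Filter ℝ} {z P : X} {e : ℝ} (hC : IsCompact C)
    (hadd : ∀ z s t, φ z (s + t) = φ (φ z s) t) (hcont : ∀ t, Continuous fun z ↦ φ z t)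
    (hV : Continuous V) (hl : ∀ s, Tendsto (· + s) l l) (hz : ∀ t, φ z t ∈ C)
    (hlim : Tendsto (fun t ↦ V (φ z t)) l (𝓝 e))
    (hP : ∀ q ∈ C, (∀ t, V (φ q t) = e) → q = P) : Tendsto (φ z) l (𝓝 P) := by
  refine hC.tendsto_nhds_of_unique_mapClusterPt (.of_forall hz) fun q hq hcl ↦ hP q hq fun t ↦ ?_
  have h1 : MapClusterPt (V (φ q t)) l ((fun x ↦ V (φ x t)) ∘ φ z) :=
    hcl.continuousAt_comp (f := fun x ↦ V (φ x t)) (hV.comp (hcont t)).continuousAt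
  have h2 : Tendsto ((fun x ↦ V (φ x t)) ∘ φ z) l (𝓝 e) := by
    refine (hlim.comp (hl t)).congr fun s ↦ ?_
    simp [hadd]
  exact eq_of_nhds_neBot (ClusterPt.mono h1 h2)

/-- A compact positively invariant set of a flow that contains a path joining two rest points
contains a full orbit on which `h` takes a prescribed value between its values at the rest
points. -/
theorem exists_full_orbit_of_path {X : Type*} [TopologicalSpace X] [FirstCountableTopology X]
    [T2Space X] {φ : X → ℝ → X} {C : Set X} {h : X → ℝ} {γ : ℝ → X} {a b m : ℝ}
    (hC : IsCompact C) (hadd : ∀ z s t, φ z (s + t) = φ (φ z s) t) (hcont : ∀ t, Continuous fun z ↦ φ z t)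
    (hinv : ∀ z ∈ C, ∀ t, 0 ≤ t → φ z t ∈ C) (hh : Continuous h)
    (hab : a ≤ b) (hγ : ContinuousOn γ (Icc a b)) (hγC : ∀ s ∈ Icc a b, γ s ∈ C)
    (ha : ∀ t, φ (γ a) t = γ a) (hb : ∀ t, φ (γ b) t = γ b)
    (hm : m ∈ Icc (h (γ a)) (h (γ b))) : ∃ z, h z = m ∧ ∀ t, φ z t ∈ C := by
  have hex : ∀ n : ℕ, ∃ y ∈ C, h (φ y n) = m := by
    intro n
    have hc : ContinuousOn (fun s ↦ h (φ (γ s) n)) (Icc a b) :=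
      (hh.comp (hcont n)).comp_continuousOn hγ
    obtain ⟨s, hs, hsm⟩ := intermediate_value_Icc hab hc (by simpa [ha, hb] using hm)
    exact ⟨γ s, hγC s hs, hsm⟩
  choose y hyC hym using hex
  obtain ⟨z, hzC, ν, hν, hlim⟩ := hC.tendsto_subseq fun n ↦ hinv _ (hyC n) n n.cast_nonneg
  refine ⟨z, ?_, fun t ↦ ?_⟩
  · refine tendsto_nhds_unique ((hh.tendsto z).comp hlim) ?_
    simp [Function.comp_def, hym]
  · refine hC.isClosed.mem_of_tendsto (((hcont t).tendsto z).comp hlim) ?_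
    filter_upwards [eventually_ge_atTop ⌈-t⌉₊] with n hn
    have h1 : -t ≤ (ν n : ℝ) :=
      (Nat.le_ceil _).trans (by exact_mod_cast hn.trans (hν.id_le n))
    simpa [hadd] using hinv _ (hyC (ν n)) (ν n + t) (by linarith)

/-- A gradient-like flow on a compact positively invariant set with two rest points joined by a
path has a connecting orbit between them. -/
theorem exists_connecting_orbit {X : Type*} [TopologicalSpace X] [FirstCountableTopology X]
    [T2Space X] {φ : X → ℝ → X} {C : Set X} {V h : X → ℝ} {γ : ℝ → X} {a b : ℝ}
    (hC : IsCompact C) (hzero : ∀ z, φ z 0 = z)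
    (hadd : ∀ z s t, φ z (s + t) = φ (φ z s) t) (hcont : ∀ t, Continuous fun z ↦ φ z t)
    (hinv : ∀ z ∈ C, ∀ t, 0 ≤ t → φ z t ∈ C) (hV : Continuous V) (hh : Continuous h)
    (hab : a ≤ b) (hγ : ContinuousOn γ (Icc a b)) (hγC : ∀ s ∈ Icc a b, γ s ∈ C)
    (ha : ∀ t, φ (γ a) t = γ a) (hb : ∀ t, φ (γ b) t = γ b)
    (hlt : h (γ a) < h (γ b)) (hVlt : V (γ b) < V (γ a))
    (hanti : ∀ z, Antitone fun t ↦ V (φ z t))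
    (hconst : ∀ z ∈ C, (∀ t, V (φ z t) = V z) → z = γ a ∨ z = γ b) :
    ∃ z, (∀ t, φ z t ∈ C) ∧ Tendsto (φ z) atBot (𝓝 (γ a)) ∧ Tendsto (φ z) atTop (𝓝 (γ b)) := by
  obtain ⟨m, hm1, hm2⟩ := exists_between hlt
  obtain ⟨z, hzm, hz⟩ := exists_full_orbit_of_path hC hadd hcont hinv hh hab hγ hγC ha hb
    ⟨hm1.le, hm2.le⟩
  have hbdd : Bornology.IsBounded (V '' C) := (hC.image hV).isBounded
  have hsub : range (fun t ↦ V (φ z t)) ⊆ V '' C := by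
    rintro _ ⟨t, rfl⟩; exact ⟨_, hz t, rfl⟩
  obtain ⟨e₁, he₁⟩ : ∃ e, Tendsto (fun t ↦ V (φ z t)) atBot (𝓝 e) :=
    ⟨_, tendsto_atBot_ciSup (hanti z) (hbdd.bddAbove.mono hsub)⟩
  obtain ⟨e₂, he₂⟩ : ∃ e, Tendsto (fun t ↦ V (φ z t)) atTop (𝓝 e) :=
    ⟨_, tendsto_atTop_ciInf (hanti z) (hbdd.bddBelow.mono hsub)⟩
  have hle₁ : ∀ t, V (φ z t) ≤ e₁ := fun t ↦ (hanti z).ge_of_tendsto he₁ t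
  have hle₂ : ∀ t, e₂ ≤ V (φ z t) := fun t ↦ (hanti z).le_of_tendsto he₂ t
  have hne : e₂ < e₁ := by
    refine lt_of_le_of_ne ((hle₂ 0).trans (hle₁ 0)) fun heq ↦ ?_
    have hall : ∀ t, V (φ z t) = e₁ := fun t ↦ le_antisymm (hle₁ t) (heq ▸ hle₂ t)
    rcases hconst z (hzero z ▸ hz 0) (fun t ↦ by rw [hall t, ← hzero z, hall 0]) with h | h
    · rw [h] at hzm; exact hm1.ne hzm
    · rw [h] at hzm; exact hm2.ne' hzm
  have hlim : ∀ (l : Filter ℝ) [l.NeBot] (e : ℝ), (∀ s, Tendsto (· + s) l l) →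
      Tendsto (fun t ↦ V (φ z t)) l (𝓝 e) →
      (V (γ a) = e ∧ Tendsto (φ z) l (𝓝 (γ a))) ∨ (V (γ b) = e ∧ Tendsto (φ z) l (𝓝 (γ b))) := by
    intro l _ e hl he
    have hq : ∀ q ∈ C, (∀ t, V (φ q t) = e) → V q = e ∧ (q = γ a ∨ q = γ b) := by
      intro q hq hqe
      have h0 : V q = e := by simpa [hzero] using hqe 0
      exact ⟨h0, hconst q hq fun t ↦ by rw [hqe t, h0]⟩
    have hunique : ∀ P, (∀ q ∈ C, (∀ t, V (φ q t) = e) → q = P) → V P = e ∧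
        Tendsto (φ z) l (𝓝 P) := by
      intro P hP
      have ht := tendsto_of_lyapunov_const hC hadd hcont hV hl hz he hP
      exact ⟨tendsto_nhds_unique ((hV.tendsto P).comp ht) he, ht⟩
    by_cases hae : V (γ a) = e
    · refine .inl (hunique _ fun q hqC hqe ↦ ?_)
      rcases hq q hqC hqe with ⟨h1, h2 | h2⟩
      · exact h2
      · rw [h2] at h1; linarith
    · refine .inr (hunique _ fun q hqC hqe ↦ ?_)
      rcases hq q hqC hqe with ⟨h1, h2 | h2⟩
      · rw [h2] at h1; exact absurd h1 hae
      · exact h2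
  have hbot := hlim atBot e₁ (fun s ↦ tendsto_atBot_add_const_right _ s tendsto_id) he₁
  have htop := hlim atTop e₂ (fun s ↦ tendsto_atTop_add_const_right _ s tendsto_id) he₂
  rcases hbot with ⟨h1, h2⟩ | ⟨h1, h2⟩ <;> rcases htop with ⟨h3, h4⟩ | ⟨h3, h4⟩
  · linarith
  · exact ⟨z, hz, h2, h4⟩
  · linarith
  · linarith

/-- The damped oscillator `d x'' + b(x) x' + F(x) = 0` has an orbit connecting the top `α` of the
potential hill to the bottom `β` of the adjacent well. -/
theorem exists_damped_connecting_orbit {F b : ℝ → ℝ} {K B : ℝ≥0} {d α β c η : ℝ} (hd : 0 < d)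
    (hαβ : α < β) (hF : LipschitzWith K F) (hF0 : ∀ x ≤ α, F x = 0)
    (hFneg : ∀ x ∈ Ioo α β, F x < 0) (hFβ : F β = 0) (hFne : ∀ x > β, F x ≠ 0)
    (hη : 0 < η) (hFη : ∀ x ≥ c, η ≤ F x) (hb : Continuous b) (hbpos : ∀ x, 0 < b x)
    (hbB : ∀ x, b x ≤ B) :
    ∃ x u : ℝ → ℝ, (∀ t, α ≤ x t) ∧ (∀ t, HasDerivAt x (u t) t) ∧
      (∀ t, HasDerivAt u (-(b (x t) * u t + F (x t)) / d) t) ∧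
      Tendsto x atBot (𝓝 α) ∧ Tendsto x atTop (𝓝 β) ∧
      Tendsto u atBot (𝓝 0) ∧ Tendsto u atTop (𝓝 0) := by
  obtain ⟨Φ, hΦ, hΦα⟩ : ∃ Φ : ℝ → ℝ, (∀ x, HasDerivAt Φ (F x) x) ∧ ∀ x ≤ α, Φ x = 0 := by
    refine ⟨fun x ↦ ∫ s in α..x, F s,
      fun x ↦ (hF.continuous.integral_hasStrictDerivAt α x).hasDerivAt, fun x hx ↦ ?_⟩
    have : EqOn F (fun _ ↦ 0) (uIcc α x) := fun s hs ↦ by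
      rw [uIcc_of_ge hx] at hs
      exact hF0 s hs.2
    simpa using intervalIntegral.integral_congr (μ := MeasureTheory.volume) this
  obtain ⟨L, hL⟩ : ∃ L : ℝ → ℝ, ∀ x, HasDerivAt L (b x) x :=
    ⟨fun x ↦ ∫ s in α..x, b s, fun x ↦ (hb.integral_hasStrictDerivAt α x).hasDerivAt⟩
  have hΦc : Continuous Φ := continuous_iff_continuousAt.mpr fun x ↦ (hΦ x).continuousAt
  have hLc : Continuous L := continuous_iff_continuousAt.mpr fun x ↦ (hL x).continuousAt
  have hLlip : LipschitzWith B L := by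
    refine lipschitzWith_of_nnnorm_deriv_le (fun x ↦ (hL x).differentiableAt) fun x ↦ ?_
    rw [(hL x).deriv, ← NNReal.coe_le_coe, coe_nnnorm, Real.norm_of_nonneg (hbpos x).le]
    exact hbB x
  have hΦanti : StrictAntiOn Φ (Icc α β) := by
    refine strictAntiOn_of_deriv_neg (convex_Icc α β) hΦc.continuousOn fun x hx ↦ ?_
    rw [interior_Icc] at hx
    rw [(hΦ x).deriv]
    exact hFneg x hx
  obtain ⟨X, hX⟩ : ∃ X, ∀ x, Φ x ≤ 0 → x ≤ X := by
    have hmono : MonotoneOn (fun x ↦ Φ x - η * x) (Ici c) := by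
      refine monotoneOn_of_hasDerivWithinAt_nonneg (f' := fun x ↦ F x - η) (convex_Ici c)
        (by fun_prop) (fun x _ ↦ ?_) fun x hx ↦ ?_
      · exact (((hΦ x).sub ((hasDerivAt_id x).const_mul η)).congr_deriv (by simp)).hasDerivWithinAt
      · rw [interior_Ici] at hx
        linarith [hFη x (le_of_lt hx)]
    refine ⟨max c (c - Φ c / η), fun x hx ↦ ?_⟩
    rcases le_total x c with h | h
    · exact h.trans (le_max_left _ _)
    · refine le_trans ?_ (le_max_right _ _)
      have h1 := hmono self_mem_Ici h h
      have h2 : Φ c / η * η = Φ c := div_mul_cancel₀ _ hη.ne'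
      simp only at h1
      nlinarith
  set G : ℝ × ℝ → ℝ × ℝ := fun z ↦ (d⁻¹ • (z.2 - L z.1), -F z.1) with hG
  set V : ℝ × ℝ → ℝ := fun z ↦ (z.2 - L z.1) ^ 2 / (2 * d) + Φ z.1 with hV
  set C : Set (ℝ × ℝ) := {z | α ≤ z.1 ∧ V z ≤ 0} with hCdef
  have hVc : Continuous V := by fun_prop
  obtain ⟨φ, hzero, hφ, hadd, hcont, hrest⟩ := exists_flow_of_lipschitz (G := G)
    (((lipschitzWith_smul d⁻¹).comp (LipschitzWith.prod_snd.sub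
      (hLlip.comp LipschitzWith.prod_fst))).prodMk (hF.comp LipschitzWith.prod_fst).neg)
  have hφ1 : ∀ z t, HasDerivAt (fun s ↦ (φ z s).1) (d⁻¹ * ((φ z t).2 - L (φ z t).1)) t :=
    fun z t ↦ (hφ z t).fst
  have hφ2 : ∀ z t, HasDerivAt (fun s ↦ (φ z s).2) (-F (φ z t).1) t := fun z t ↦ (hφ z t).snd
  have hy : ∀ z t, HasDerivAt (fun s ↦ (φ z s).2 - L (φ z s).1)
      (-F (φ z t).1 - b (φ z t).1 * (d⁻¹ * ((φ z t).2 - L (φ z t).1))) t := fun z t ↦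
    (hφ2 z t).sub ((hL _).comp t (hφ1 z t))
  have hVd : ∀ z t, HasDerivAt (fun s ↦ V (φ z s))
      (-b (φ z t).1 * (d⁻¹ * ((φ z t).2 - L (φ z t).1)) ^ 2) t := by
    intro z t
    refine ((((hy z t).pow 2).div_const (2 * d)).add ((hΦ _).comp t (hφ1 z t))).congr_deriv ?_
    simp only [Nat.cast_ofNat, Nat.add_one_sub_one, pow_one]
    field_simp
    ring
  have hanti : ∀ z, Antitone fun t ↦ V (φ z t) := fun z ↦
    antitone_of_hasDerivAt_nonpos (hVd z) fun t ↦ by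
      have := mul_nonneg (hbpos (φ z t).1).le (sq_nonneg (d⁻¹ * ((φ z t).2 - L (φ z t).1)))
      simp only [Pi.zero_apply]
      linarith
  have hGzero : ∀ x, F x = 0 → G (x, L x) = 0 := fun x hx ↦ by simp [hG, hx]
  have hinv : ∀ z ∈ C, ∀ t, 0 ≤ t → φ z t ∈ C := by
    rintro z ⟨hz1, hz2⟩ t ht
    have hVt : V (φ z t) ≤ 0 := by
      have := hanti z ht
      simp only [hzero] at this
      exact this.trans hz2
    refine ⟨le_of_not_gt fun hlt ↦ ?_, hVt⟩
    have hsq : (φ z t).2 = L (φ z t).1 := by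
      simp only [hV, hΦα _ hlt.le, add_zero] at hVt
      have h1 : ((φ z t).2 - L (φ z t).1) ^ 2 ≤ 0 := by
        by_contra! h
        exact absurd hVt (not_le.mpr (by positivity))
      linarith [pow_eq_zero_iff two_ne_zero |>.mp (le_antisymm h1 (sq_nonneg _))]
    have hstat : G (φ z t) = 0 := by
      have := hGzero _ (hF0 _ hlt.le)
      rwa [← hsq] at this
    have h1 := hrest _ hstat (-t)
    rw [← hadd, add_neg_cancel, hzero] at h1
    rw [← h1] at hlt
    exact absurd hz1 (not_le.mpr hlt)
  have hC : IsCompact C := by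
    obtain ⟨m, hm⟩ := isCompact_Icc.exists_bound_of_continuousOn (s := Icc α X) hΦc.continuousOn
    have hcomp : IsCompact ((fun q : ℝ × ℝ ↦ (q.1, L q.1 + q.2)) ''
        (Icc α X ×ˢ Icc (-(2 * d * m + 1)) (2 * d * m + 1))) :=
      (isCompact_Icc.prod isCompact_Icc).image (by fun_prop)
    refine hcomp.of_isClosed_subset ?_ ?_
    · exact (isClosed_le continuous_const continuous_fst).inter (isClosed_le hVc continuous_const)
    · rintro ⟨x, y⟩ ⟨hx, hVxy⟩
      simp only [hV] at hx hVxy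
      have hpos : 0 ≤ (y - L x) ^ 2 / (2 * d) := by positivity
      have hxX : x ≤ X := hX x (by linarith)
      have h1 := (abs_le.mp (hm x ⟨hx, hxX⟩)).1
      have h2 : (y - L x) ^ 2 ≤ 2 * d * m := by
        have := (div_le_iff₀ (by positivity : 0 < 2 * d)).mp
          (by linarith : (y - L x) ^ 2 / (2 * d) ≤ m)
        linarith
      exact ⟨(x, y - L x), ⟨⟨hx, hxX⟩, by constructor <;> nlinarith⟩, by simp⟩
  have hconst : ∀ z ∈ C, (∀ t, V (φ z t) = V z) → z = (α, L α) ∨ z = (β, L β) := by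
    rintro z ⟨hz1, -⟩ hz
    have hvel : ∀ t, (φ z t).2 - L (φ z t).1 = 0 := by
      intro t
      have h1 := hVd z t
      simp only [hz] at h1
      have h2 := h1.unique (hasDerivAt_const t (V z))
      simpa [(hbpos _).ne', hd.ne'] using h2
    have hFz : F z.1 = 0 := by
      have h1 := hy z 0
      simp only [hvel] at h1
      have h2 := h1.unique (hasDerivAt_const 0 (0 : ℝ))
      simpa [hzero] using h2
    have hzL : z.2 = L z.1 := by
      have := hvel 0
      rw [hzero] at this
      linarith
    have hx : z.1 = α ∨ z.1 = β := by
      rcases hz1.eq_or_lt with h | h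
      · exact .inl h.symm
      · rcases lt_trichotomy z.1 β with h' | h' | h'
        · exact absurd hFz (hFneg _ ⟨h, h'⟩).ne
        · exact .inr h'
        · exact absurd hFz (hFne _ h')
    rcases hx with h | h
    · exact .inl (Prod.ext h (by rw [hzL, h]))
    · exact .inr (Prod.ext h (by rw [hzL, h]))
  have hΦα0 : Φ α = 0 := hΦα α le_rfl
  have hVγ : ∀ s, V (s, L s) = Φ s := fun s ↦ by simp [hV]
  obtain ⟨z, hzC, hbot, htop⟩ := exists_connecting_orbit (φ := φ) (V := V) (h := Prod.fst)
    (γ := fun s ↦ (s, L s)) (a := α) (b := β) hC hzero hadd hcont hinv hVc continuous_fst hαβ.le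
    (by fun_prop)
    (fun s hs ↦ ⟨hs.1, by
      rw [hVγ, ← hΦα0]
      exact hΦanti.antitoneOn (left_mem_Icc.mpr hαβ.le) hs hs.1⟩)
    (hrest _ (hGzero α (hF0 α le_rfl))) (hrest _ (hGzero β hFβ)) hαβ
    (by rw [hVγ, hVγ]; exact hΦanti (left_mem_Icc.mpr hαβ.le) (right_mem_Icc.mpr hαβ.le) hαβ)
    hanti hconst
  have hu : ∀ {l : Filter ℝ} {s : ℝ}, Tendsto (φ z) l (𝓝 (s, L s)) →
      Tendsto (fun t ↦ d⁻¹ * ((φ z t).2 - L (φ z t).1)) l (𝓝 0) := by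
    intro l s hs
    have hc : Continuous fun q : ℝ × ℝ ↦ d⁻¹ * (q.2 - L q.1) := by fun_prop
    simpa [Function.comp_def] using (hc.tendsto (s, L s)).comp hs
  refine ⟨fun t ↦ (φ z t).1, fun t ↦ d⁻¹ * ((φ z t).2 - L (φ z t).1), fun t ↦ (hzC t).1, hφ1 z,
    fun t ↦ ?_, (continuous_fst.tendsto _).comp hbot, (continuous_fst.tendsto _).comp htop,
    hu hbot, hu htop⟩
  refine ((hy z t).const_mul d⁻¹).congr_deriv ?_
  field_simp
  ring

theorem strictConvexOn_of_hasDerivAt_strictMonoOn {D : Set ℝ} (hD : Convex ℝ D) (hDo : IsOpen D)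
    {f f' : ℝ → ℝ} (hf : ∀ x ∈ D, HasDerivAt f (f' x) x) (hf' : StrictMonoOn f' D) :
    StrictConvexOn ℝ D f := by
  refine StrictMonoOn.strictConvexOn_of_deriv hD (HasDerivAt.continuousOn hf) ?_
  rw [hDo.interior_eq]
  intro x hx y hy hxy
  rw [(hf x hx).deriv, (hf y hy).deriv]
  exact hf' hx hy hxy

/-- Existence of shock profiles (heteroclinic connections from `vm`
to `vp`) for Slemrod's model with an ideal gas law and capillarity `d > 0`. -/
theorem profile_existence
    (p p' p'' : ℝ → ℝ)
    (hp'd : ∀ v ∈ Ioi (0:ℝ), HasDerivAt p (p' v) v)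
    (hp''d : ∀ v ∈ Ioi (0:ℝ), HasDerivAt p' (p'' v) v)
    (hp''cont : ContinuousOn p'' (Ioi 0))
    (hp'neg : ∀ v ∈ Ioi (0:ℝ), p' v < 0)
    (hp''pos : ∀ v ∈ Ioi (0:ℝ), 0 < p'' v)
    (vp vm a d : ℝ)
    (hvp : 0 < vp) (hvlt : vp < vm) (hd : 0 < d)
    (ha : a = -(vp - vm) / (p vp - p vm)) :
    ∃ vhat vhat' vhat'' : ℝ → ℝ,
      (∀ x, 0 < vhat x) ∧
      (∀ x, HasDerivAt vhat (vhat' x) x) ∧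
      (∀ x, HasDerivAt vhat' (vhat'' x) x) ∧
      Continuous vhat'' ∧
      (∃ x y, vhat x ≠ vhat y) ∧
      (∀ x, vhat x - vm + a * (p (vhat x) - p vm) = vhat' x / vhat x - d * vhat'' x) ∧
      Tendsto vhat atBot (𝓝 vm) ∧
      Tendsto vhat atTop (𝓝 vp) ∧
      Tendsto vhat' atBot (𝓝 0) ∧
      Tendsto vhat' atTop (𝓝 0) := by
  have hvm : 0 < vm := hvp.trans hvlt
  have hpanti : StrictAntiOn p (Ioi 0) := by
    refine strictAntiOn_of_deriv_neg (convex_Ioi 0) (HasDerivAt.continuousOn hp'd) fun x hx ↦ ?_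
    rw [interior_Ioi] at hx
    rw [(hp'd x hx).deriv]
    exact hp'neg x hx
  have hp'mono : StrictMonoOn p' (Ioi 0) := by
    refine strictMonoOn_of_deriv_pos (convex_Ioi 0) (HasDerivAt.continuousOn hp''d) fun x hx ↦ ?_
    rw [interior_Ioi] at hx
    rw [(hp''d x hx).deriv]
    exact hp''pos x hx
  have hpv : 0 < p vp - p vm := sub_pos.mpr (hpanti hvp hvm hvlt)
  have ha0 : 0 < a := by rw [ha]; exact div_pos (by linarith) hpv
  have haeq : a * (p vp - p vm) = -(vp - vm) := by rw [ha, div_mul_cancel₀ _ hpv.ne']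
  set f : ℝ → ℝ := fun v ↦ v - vm + a * (p v - p vm) with hf
  have hf' : ∀ v ∈ Ioi (0 : ℝ), HasDerivAt f (1 + a * p' v) v := fun v hv ↦
    ((hasDerivAt_id v).sub_const vm).add (((hp'd v hv).sub_const (p vm)).const_mul a)
  have hconv : StrictConvexOn ℝ (Ioi 0) f :=
    strictConvexOn_of_hasDerivAt_strictMonoOn (convex_Ioi 0) isOpen_Ioi hf'
      fun x hx y hy hxy ↦ by simpa [ha0] using hp'mono hx hy hxy
  have hfvm : f vm = 0 := by simp [hf]
  have hfvp : f vp = 0 := by simp only [hf]; linarith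
  have hpos : ∀ {x : ℝ}, vp ≤ x → x ∈ Ioi (0 : ℝ) := fun h ↦ hvp.trans_le h
  have hfneg : ∀ x ∈ Ioo vp vm, f x < 0 := by
    intro x hx
    have h := hconv.slope_strict_mono_adjacent (hpos le_rfl) hvm hx.1 hx.2
    rw [hfvm, hfvp, div_lt_div_iff₀ (by linarith [hx.1]) (by linarith [hx.2])] at h
    nlinarith [hx.1, hx.2]
  have hfpos : ∀ x > vm, 0 < f x := by
    intro x hx
    have h := hconv.slope_strict_mono_adjacent (hpos le_rfl) (hvm.trans hx) hvlt hx
    rw [hfvm, hfvp, sub_zero, zero_div, sub_zero] at h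
    exact (div_pos_iff_of_pos_right (sub_pos.mpr hx)).mp h
  have hfge : ∀ x ≥ vm + 1, f (vm + 1) ≤ f x := by
    intro x hx
    rcases hx.eq_or_lt with h | h
    · rw [h]
    · have h1 := hconv.slope_strict_mono_adjacent hvm (hvm.trans (by linarith : vm < x))
        (lt_add_one vm) h
      have h2 := hfpos (vm + 1) (lt_add_one vm)
      rw [hfvm, sub_zero, add_sub_cancel_left, div_one] at h1
      have h3 := (div_pos_iff_of_pos_right (sub_pos.mpr h)).mp (h2.trans h1)
      linarith
  have hflip : LipschitzOnWith (1 + a * |p' vp|).toNNReal f (Ici vp) := by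
    refine Convex.lipschitzOnWith_of_nnnorm_hasDerivWithin_le (convex_Ici vp)
      (fun x hx ↦ (hf' x (hpos hx)).hasDerivWithinAt) fun x hx ↦ ?_
    rw [← NNReal.coe_le_coe, coe_nnnorm, Real.coe_toNNReal _ (by positivity), Real.norm_eq_abs,
      abs_of_neg (hp'neg vp hvp), abs_le]
    have h1 := mul_le_mul_of_nonneg_left (hp'mono.monotoneOn hvp (hpos hx) hx) ha0.le
    have h2 := mul_neg_of_pos_of_neg ha0 (hp'neg x (hpos hx))
    constructor <;> linarith
  have hmaxlip : LipschitzWith 1 fun x : ℝ ↦ max x vp := LipschitzWith.id.max_const vp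
  have hFlip := lipschitzOnWith_univ.mp
    (hflip.comp hmaxlip.lipschitzOnWith fun x (_ : x ∈ univ) ↦ le_max_right x vp)
  have hmaxpos : ∀ x, 0 < max x vp := fun x ↦ lt_max_of_lt_right hvp
  have hmax : ∀ {x : ℝ}, vp ≤ x → max x vp = x := fun h ↦ max_eq_left h
  obtain ⟨x, u, hx, hxd, hud, hx₁, hx₂, hu₁, hu₂⟩ := exists_damped_connecting_orbit
    (F := f ∘ fun x ↦ max x vp) (b := fun x ↦ (max x vp)⁻¹) (B := (vp⁻¹).toNNReal)
    (c := vm + 1) (η := f (vm + 1)) hd hvlt hFlip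
    (fun x hx ↦ by simp [hx, hfvp])
    (fun x hx ↦ by simpa [hmax hx.1.le] using hfneg x hx)
    (by simp [hmax hvlt.le, hfvm])
    (fun x hx ↦ by simpa [hmax (hvlt.trans hx).le] using (hfpos x hx).ne')
    (hfpos _ (lt_add_one vm))
    (fun x hx ↦ by simpa [hmax (by linarith : vp ≤ x)] using hfge x hx)
    (hmaxlip.continuous.inv₀ fun x ↦ (hmaxpos x).ne')
    (fun x ↦ inv_pos.mpr (hmaxpos x))
    (fun x ↦ by
      rw [Real.coe_toNNReal _ (by positivity)]
      exact inv_anti₀ hvp (le_max_right x vp))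
  simp only [Function.comp_apply, hmax (hx _)] at hud
  have hxpos : ∀ t, 0 < x t := fun t ↦ hpos (hx t)
  have hxc : Continuous x := continuous_iff_continuousAt.mpr fun t ↦ (hxd t).continuousAt
  have huc : Continuous u := continuous_iff_continuousAt.mpr fun t ↦ (hud t).continuousAt
  have hfc : Continuous fun t ↦ f (x t) :=
    (HasDerivAt.continuousOn hf').comp_continuous hxc hxpos
  refine ⟨fun t ↦ x (-t), fun t ↦ -u (-t), fun t ↦ -((x (-t))⁻¹ * u (-t) + f (x (-t))) / d,
    fun t ↦ hxpos _, fun t ↦ ?_, fun t ↦ ?_, ?_, ?_, fun t ↦ ?_, hx₂.comp tendsto_neg_atBot_atTop,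
    hx₁.comp tendsto_neg_atTop_atBot, ?_, ?_⟩
  · simpa [Function.comp_def] using (hxd (-t)).comp t (hasDerivAt_neg t)
  · exact (((hud (-t)).comp t (hasDerivAt_neg t)).neg).congr_deriv (by ring)
  · have h1 : Continuous fun t ↦ -((x t)⁻¹ * u t + f (x t)) / d :=
      (((hxc.inv₀ fun t ↦ (hxpos t).ne').mul huc).add hfc).neg.div_const d
    exact h1.comp continuous_neg
  · by_contra! hall
    have hconst : x = fun _ ↦ x 0 := funext fun t ↦ by simpa using hall (-t) 0
    rw [hconst] at hx₁ hx₂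
    exact hvlt.ne ((tendsto_nhds_unique hx₁ tendsto_const_nhds).trans
      (tendsto_nhds_unique tendsto_const_nhds hx₂))
  · have h1 := (hxpos (-t)).ne'
    simp only [hf]
    field_simp
    ring
  · simpa using (hu₂.comp tendsto_neg_atBot_atTop).neg
  · simpa using (hu₁.comp tendsto_neg_atTop_atBot).neg
end

section
/- Fix v₋ > 0, d > 0, and a pressure law p : (0,∞) → ℝ of class C³ with p′ < 0 and p″ > 0. Then there exists ε₀ > 0 such that for every v₊ with 0 < v₋ − v₊ < ε₀, every shock profile v̂ (C² solution of v̂ − v₋ + a(p(v̂) − p(v₋)) = v̂′/v̂ − d v̂″ with a = −(v₊ − v₋)/(p(v₊) − p(v₋)), v̂(−∞) = v₋, v̂(+∞) = v₊, v̂′(±∞) = 0) is strictly decreasing, i.e. monotone. In other words, small-amplitude shocks of Slemrod's model are monotone for any fixed capillarity strength d. -/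
open Filter Topology Set

/-- A one-sided Grönwall inequality which only constrains the derivative where the function is
positive. -/
theorem nonpos_of_deriv_le_mul_of_pos {f f' : ℝ → ℝ} {K a b : ℝ} (hab : a ≤ b)
    (hf : ∀ x, HasDerivAt f (f' x) x) (ha : f a ≤ 0)
    (hle : ∀ x ∈ Icc a b, 0 < f x → f' x ≤ K * f x) : f b ≤ 0 := by
  by_contra! hb
  have hfc : Continuous f := continuous_iff_continuousAt.2 fun x => (hf x).continuousAt
  have hS : IsCompact (Icc a b ∩ {x | f x ≤ 0}) :=
    isCompact_Icc.inter_right (isClosed_le hfc continuous_const)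
  obtain ⟨z, ⟨hz, hfz⟩, hmax⟩ := hS.exists_isGreatest ⟨a, left_mem_Icc.2 hab, ha⟩
  have hpos : ∀ x ∈ Ioo z b, 0 < f x := by
    intro x hx
    by_contra! h
    exact absurd (hmax ⟨⟨hz.1.trans hx.1.le, hx.2.le⟩, h⟩) (not_le.2 hx.1)
  have hder : ∀ x, HasDerivAt (fun x => f x * Real.exp (-K * x))
      (f' x * Real.exp (-K * x) + f x * (Real.exp (-K * x) * (-K * 1))) x := fun x =>
    (hf x).mul (((hasDerivAt_id x).const_mul (-K)).exp)
  have hanti : AntitoneOn (fun x => f x * Real.exp (-K * x)) (Icc z b) := by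
    refine antitoneOn_of_hasDerivWithinAt_nonpos (convex_Icc z b)
      (fun x _ => (hder x).continuousAt.continuousWithinAt)
      (fun x _ => (hder x).hasDerivWithinAt) fun x hx => ?_
    rw [interior_Icc] at hx
    have h1 := hle x ⟨hz.1.trans hx.1.le, hx.2.le⟩ (hpos x hx)
    have h2 := Real.exp_pos (-K * x)
    nlinarith
  have h := hanti (left_mem_Icc.2 hz.2) (right_mem_Icc.2 hz.2) hz.2
  have h1 : 0 < f b * Real.exp (-K * b) := mul_pos hb (Real.exp_pos _)
  have h2 : f z * Real.exp (-K * z) ≤ 0 := mul_nonpos_of_nonpos_of_nonneg hfz (Real.exp_pos _).le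
  simp only at h
  linarith

/-- The rest point `c` of `v' = w`, `d w' = w / v - g v` is not reached in finite time by a
solution that starts elsewhere. -/
theorem eq_of_rest_point {g g' v w w' : ℝ → ℝ} {c d X y : ℝ} (hd : 0 < d)
    (hg : ∀ s ∈ Ioi (0 : ℝ), HasDerivAt g (g' s) s) (hg' : ContinuousOn g' (Ioi 0))
    (hgc : g c = 0) (hpos : ∀ x, 0 < v x) (hv : ∀ x, HasDerivAt v (w x) x)
    (hw : ∀ x, HasDerivAt w (w' x) x) (hode : ∀ x, d * w' x = w x / v x - g (v x))
    (hvX : v X = c) (hwX : w X = 0) (hy : y ≤ X) : v y = c := by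
  have hvc : Continuous v := continuous_iff_continuousAt.2 fun x => (hv x).continuousAt
  have hne : (Icc y X).Nonempty := nonempty_Icc.2 hy
  obtain ⟨xm, -, hmin⟩ := isCompact_Icc.exists_isMinOn hne hvc.continuousOn
  obtain ⟨xM, -, hmax⟩ := isCompact_Icc.exists_isMaxOn hne hvc.continuousOn
  have hsub : Icc (v xm) (v xM) ⊆ Ioi 0 := fun s hs => (hpos xm).trans_le hs.1
  have hmem : ∀ x ∈ Icc y X, v x ∈ Icc (v xm) (v xM) := fun x hx => ⟨hmin hx, hmax hx⟩
  obtain ⟨L, hL⟩ := isCompact_Icc.exists_bound_of_continuousOn (hg'.mono hsub)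
  have hlip : ∀ x ∈ Icc y X, |g (v x)| ≤ L * |v x - c| := by
    intro x hx
    have h := (convex_Icc (v xm) (v xM)).norm_image_sub_le_of_norm_hasDerivWithin_le
      (fun s hs => (hg s (hsub hs)).hasDerivWithinAt) hL
      (hmem X (right_mem_Icc.2 hy)) (hmem x hx)
    simpa [hvX, hgc, Real.norm_eq_abs] using h
  have key : (v y - c) ^ 2 + w y ^ 2 ≤ 0 := by
    have hr : ∀ t, HasDerivAt (fun t : ℝ => X - t) (-1) t := fun t => by
      simpa using (hasDerivAt_id t).const_sub X
    have hfd : ∀ t, HasDerivAt (fun t => (v (X - t) - c) ^ 2 + w (X - t) ^ 2)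
        (-(2 * (v (X - t) - c) * w (X - t) + 2 * w (X - t) * w' (X - t))) t := by
      intro t
      have h1 := (((hv (X - t)).comp t (hr t)).sub_const c).pow 2
      have h2 := ((hw (X - t)).comp t (hr t)).pow 2
      refine (h1.add h2).congr_deriv ?_
      simp only [Function.comp_apply]
      push_cast
      ring
    have := nonpos_of_deriv_le_mul_of_pos (K := 1 + |L| / d) (sub_nonneg.2 hy) hfd
      (by simp [hvX, hwX]) (by
        intro t ht _
        have hx : X - t ∈ Icc y X := ⟨by linarith [ht.2], by linarith [ht.1]⟩
        have hl := hlip _ hx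
        have ho := hode (X - t)
        have hp := hpos (X - t)
        set V := v (X - t)
        set W := w (X - t)
        have hw' : w' (X - t) = (W / V - g V) / d := by
          rw [eq_div_iff hd.ne', mul_comm, ho]
        rw [hw']
        have hl' : |g V| ≤ |L| * |V - c| :=
          hl.trans (mul_le_mul_of_nonneg_right (le_abs_self L) (abs_nonneg _))
        have e1 : 2 * |W| * |V - c| ≤ (V - c) ^ 2 + W ^ 2 := by
          rw [← sq_abs (V - c), ← sq_abs W]; nlinarith [sq_nonneg (|W| - |V - c|)]
        have e2 : -(2 * (V - c) * W) ≤ (V - c) ^ 2 + W ^ 2 := by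
          nlinarith [sq_nonneg (V - c + W)]
        have e3 : W * g V ≤ |W| * (|L| * |V - c|) :=
          (le_abs_self _).trans (by rw [abs_mul]; gcongr)
        have e4 : 2 * (W * g V) ≤ |L| * ((V - c) ^ 2 + W ^ 2) := by
          nlinarith [mul_le_mul_of_nonneg_left e1 (abs_nonneg L)]
        have e5 : 0 ≤ W ^ 2 / V := by positivity
        have e6 : -(2 * W * ((W / V - g V) / d)) ≤ |L| / d * ((V - c) ^ 2 + W ^ 2) := by
          rw [div_mul_eq_mul_div, ← mul_div_assoc, ← neg_div]
          gcongr
          have : 2 * W * (W / V - g V) = 2 * (W ^ 2 / V) - 2 * (W * g V) := by ring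
          linarith
        linarith)
    simpa using this
  nlinarith [sq_nonneg (v y - c), sq_nonneg (w y)]

/-- By dissipation of energy, a solution of `v' = w`, `d w' = w / v - g v` that tends to the rest
point `c` at `+∞` and to a larger limit at `-∞` stays above `c`. -/
theorem lt_of_tendsto_rest_point {g g' v w w' : ℝ → ℝ} {c b d : ℝ} (hd : 0 < d)
    (hc : 0 < c) (hcb : c < b)
    (hg : ∀ s ∈ Ioi (0 : ℝ), HasDerivAt g (g' s) s) (hg' : ContinuousOn g' (Ioi 0))
    (hgc : g c = 0) (hpos : ∀ x, 0 < v x) (hv : ∀ x, HasDerivAt v (w x) x)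
    (hw : ∀ x, HasDerivAt w (w' x) x) (hode : ∀ x, d * w' x = w x / v x - g (v x))
    (hbot : Tendsto v atBot (𝓝 b)) (htop : Tendsto v atTop (𝓝 c))
    (hwtop : Tendsto w atTop (𝓝 0)) (x : ℝ) : c < v x := by
  have hvc : Continuous v := continuous_iff_continuousAt.2 fun x => (hv x).continuousAt
  have hgcont : ContinuousOn g (Ioi 0) := fun s hs => (hg s hs).continuousAt.continuousWithinAt
  have hne : ∀ X, v X ≠ c := by
    intro X hX
    have hwX : w X = 0 := by
      have hG : ∀ s ∈ Ioi (0 : ℝ), HasDerivAt (fun s => ∫ t in c..s, g t) (g s) s := by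
        intro s hs
        refine intervalIntegral.integral_hasDerivAt_right
          (ContinuousOn.intervalIntegrable (hgcont.mono fun t ht => ?_))
          (hgcont.stronglyMeasurableAtFilter isOpen_Ioi s hs) (hg s hs).continuousAt
        exact (lt_min hc hs).trans_le ht.1
      set G : ℝ → ℝ := fun s => ∫ t in c..s, g t with hGdef
      have hE : ∀ x, HasDerivAt (fun x => d / 2 * w x ^ 2 + G (v x)) (w x ^ 2 / v x) x := by
        intro x
        have h1 := ((hw x).pow 2).const_mul (d / 2)
        have h2 := (hG (v x) (hpos x)).comp x (hv x)
        refine (h1.add h2).congr_deriv ?_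
        have := hode x
        push_cast
        linear_combination w x * this
      have hmono : Monotone (fun x => d / 2 * w x ^ 2 + G (v x)) :=
        monotone_of_hasDerivAt_nonneg hE fun x => by
          have := hpos x
          positivity
      have hlim : Tendsto (fun x => d / 2 * w x ^ 2 + G (v x)) atTop (𝓝 (d / 2 * 0 ^ 2 + G c)) :=
        ((hwtop.pow 2).const_mul (d / 2)).add ((hG c hc).continuousAt.tendsto.comp htop)
      have hle := hmono.ge_of_tendsto hlim X
      simp only [hX] at hle
      have h0 : w X ^ 2 ≤ 0 := by nlinarith
      exact pow_eq_zero_iff two_ne_zero |>.1 (le_antisymm h0 (sq_nonneg _))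
    refine hcb.ne (tendsto_nhds_unique (tendsto_const_nhds.congr' ?_) hbot)
    filter_upwards [eventually_le_atBot X] with y hy
    exact (eq_of_rest_point hd hg hg' hgc hpos hv hw hode hX hwX hy).symm
  by_contra! hx
  obtain ⟨y, hy⟩ := (hbot.eventually (lt_mem_nhds hcb)).exists
  obtain ⟨z, hz⟩ := intermediate_value_univ x y hvc ⟨hx, hy.le⟩
  exact hne z hz

/-- Heteroclinic solutions of `v' = w`, `d w' = w / v - g v` from `b` to the saddle `c < b` are
strictly decreasing if `g` is nonpositive between the rest points and the linearization at `b` is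
a node. -/
theorem strictAnti_of_heteroclinic {g g' v w w' : ℝ → ℝ} {c b d γ : ℝ} (hd : 0 < d)
    (hc : 0 < c) (hcb : c < b)
    (hg : ∀ s ∈ Ioi (0 : ℝ), HasDerivAt g (g' s) s) (hg' : ContinuousOn g' (Ioi 0))
    (hgc : g c = 0) (hgneg : ∀ s, c < s → s < b → g s ≤ 0)
    (hgtan : ∀ s, c < s → s < b → γ * (s - b) ≤ g s)
    (hγ : γ ≤ 1 / (4 * d * b ^ 2))
    (hpos : ∀ x, 0 < v x) (hv : ∀ x, HasDerivAt v (w x) x)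
    (hw : ∀ x, HasDerivAt w (w' x) x) (hode : ∀ x, d * w' x = w x / v x - g (v x))
    (hbot : Tendsto v atBot (𝓝 b)) (htop : Tendsto v atTop (𝓝 c))
    (hwtop : Tendsto w atTop (𝓝 0)) : StrictAnti v := by
  have hlt := lt_of_tendsto_rest_point hd hc hcb hg hg' hgc hpos hv hw hode hbot htop hwtop
  have hvc : Continuous v := continuous_iff_continuousAt.2 fun x => (hv x).continuousAt
  have hb : 0 < b := hc.trans hcb
  have hw'eq : ∀ x, w' x = (w x / v x - g (v x)) / d := fun x => by
    rw [eq_div_iff hd.ne', mul_comm, hode x]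
  have hbelow : ∀ x, v x < b := by
    by_contra! hex
    obtain ⟨x₁, hx₁⟩ := hex
    obtain ⟨N, hN⟩ := eventually_atTop.1 (htop.eventually (gt_mem_nhds hcb))
    have hS : IsCompact (Icc x₁ N ∩ {x | b ≤ v x}) :=
      isCompact_Icc.inter_right (isClosed_le continuous_const hvc)
    have hxN : x₁ ≤ N := le_of_not_ge fun h => absurd (hN _ h) (not_lt.2 hx₁)
    obtain ⟨z, ⟨hz, hvz⟩, hmax⟩ := hS.exists_isGreatest ⟨x₁, left_mem_Icc.2 hxN, hx₁⟩
    have hafter : ∀ x, z < x → v x < b := by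
      intro x hx
      by_contra! h
      rcases le_or_gt x N with hxN | hxN
      · exact absurd (hmax ⟨⟨hz.1.trans hx.le, hxN⟩, h⟩) (not_le.2 hx)
      · exact absurd (hN x hxN.le) (not_lt.2 h)
    have hvzb : v z = b := by
      refine le_antisymm (le_of_tendsto (hvc.continuousWithinAt (s := Ioi z)) ?_) hvz
      filter_upwards [self_mem_nhdsWithin] with x hx using (hafter x hx).le
    have hwz : w z ≤ 0 := by
      have hslope := (hv z).tendsto_slope.mono_left
        (nhdsWithin_mono z (fun x (hx : x ∈ Ioi z) => hx.ne'))
      refine le_of_tendsto hslope ?_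
      filter_upwards [self_mem_nhdsWithin] with x hx
      rw [slope_def_field]
      exact div_nonpos_of_nonpos_of_nonneg (by linarith [hafter x hx])
        (sub_nonneg.2 (le_of_lt hx))
    set m : ℝ := 1 / (2 * d * b) with hm
    have hmpos : 0 < m := by positivity
    have hφ : ∀ x, HasDerivAt (fun x => w x - m * (v x - b)) (w' x - m * w x) x := fun x =>
      (hw x).sub (((hv x).sub_const b).const_mul m)
    have hφz : w z - m * (v z - b) ≤ 0 := by rw [hvzb]; simpa using hwz
    have hφle : ∀ y, z ≤ y → w y - m * (v y - b) ≤ 0 := by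
      intro y hy
      refine nonpos_of_deriv_le_mul_of_pos (f := fun x => w x - m * (v x - b))
        (K := 1 / (d * c)) hy hφ hφz fun x hx hxpos => ?_
      have hxz : z < x := by
        refine lt_of_le_of_ne hx.1 ?_
        rintro rfl
        exact absurd hxpos (not_lt.2 hφz)
      have h1 := hafter x hxz
      have h2 := hlt x
      have h3 := hgtan _ h2 h1
      have hp := hpos x
      rw [hw'eq]
      set V := v x
      set W := w x
      set F := W - m * (V - b) with hF
      have hW : W = F - m * (b - V) := by rw [hF]; ring
      have i1 : F / V ≤ F / c := by gcongr
      have i2 : m / b ≤ m / V := by gcongr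
      have i3 : d * m ^ 2 - m / b + 1 / (4 * d * b ^ 2) = 0 := by
        rw [hm]; field_simp; ring
      have i4 : (b - V) * (d * m ^ 2 - m / V + γ) ≤ 0 :=
        mul_nonpos_of_nonneg_of_nonpos (by linarith) (by linarith)
      have i5 : W / V = F / V - (b - V) * (m / V) := by rw [hW]; ring
      have i6 : 0 ≤ d * m * F := by positivity
      have i7 : 1 / (d * c) * F = F / c / d := by field_simp
      have i8 : (W / V - g V) / d - m * W = (W / V - g V - d * m * W) / d := by field_simp
      rw [i7, i8]
      gcongr
      rw [i5]
      have i9 : d * m * W = d * m * F - (b - V) * (d * m ^ 2) := by rw [hW]; ring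
      rw [i9]
      nlinarith
    have hlim : Tendsto (fun x => w x - m * (v x - b)) atTop (𝓝 (0 - m * (c - b))) :=
      hwtop.sub ((htop.sub_const b).const_mul m)
    have hle := le_of_tendsto hlim ((eventually_ge_atTop z).mono hφle)
    nlinarith
  have hwneg : ∀ x, w x < 0 := by
    by_contra! hex
    obtain ⟨x₀, hx₀⟩ := hex
    have hwnn : ∀ y, x₀ ≤ y → 0 ≤ w y := by
      intro y hy
      refine neg_nonpos.1 (nonpos_of_deriv_le_mul_of_pos (f := fun x => -w x) (K := 1 / (d * c)) hy
        (fun x => (hw x).neg) (by simpa using hx₀) fun x _ hxpos => ?_)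
      have h1 := hgneg _ (hlt x) (hbelow x)
      have h2 : -w x / v x ≤ -w x / c := by
        have := (hlt x).le
        gcongr
      have h3 : 1 / (d * c) * -w x = -w x / c / d := by field_simp
      rw [hw'eq, h3, ← neg_div]
      gcongr
      rw [neg_sub, sub_eq_add_neg, ← neg_div]
      linarith
    have hmono : MonotoneOn v (Ici x₀) :=
      monotoneOn_of_hasDerivWithinAt_nonneg (convex_Ici x₀) hvc.continuousOn
        (fun x _ => (hv x).hasDerivWithinAt) fun x hx => hwnn x (interior_subset hx)
    have hle : v x₀ ≤ c := ge_of_tendsto htop <| (eventually_ge_atTop x₀).mono fun y hy =>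
      hmono self_mem_Ici hy hy
    exact absurd (hlt x₀) (not_lt.2 hle)
  exact strictAnti_of_hasDerivAt_neg hv hwneg

/-- For fixed `vm > 0`, `d > 0`, and a `C³` ideal gas law, all
sufficiently small-amplitude shock profiles of Slemrod's model are strictly
decreasing (monotone). -/
theorem small_amplitude_monotone
    (vm d : ℝ) (hvm : 0 < vm) (hd : 0 < d)
    (p p' p'' p''' : ℝ → ℝ)
    (hp'd : ∀ v ∈ Ioi (0:ℝ), HasDerivAt p (p' v) v)
    (hp''d : ∀ v ∈ Ioi (0:ℝ), HasDerivAt p' (p'' v) v)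
    (hp'''d : ∀ v ∈ Ioi (0:ℝ), HasDerivAt p'' (p''' v) v)
    (hp'''cont : ContinuousOn p''' (Ioi 0))
    (hp'neg : ∀ v ∈ Ioi (0:ℝ), p' v < 0)
    (hp''pos : ∀ v ∈ Ioi (0:ℝ), 0 < p'' v) :
    ∃ ε₀ > 0, ∀ vp a : ℝ, 0 < vp → vp < vm → vm - vp < ε₀ →
      a = -(vp - vm) / (p vp - p vm) →
      ∀ vhat vhat' vhat'' : ℝ → ℝ,
        (∀ x, 0 < vhat x) →
        (∀ x, HasDerivAt vhat (vhat' x) x) →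
        (∀ x, HasDerivAt vhat' (vhat'' x) x) →
        (∀ x, vhat x - vm + a * (p (vhat x) - p vm) = vhat' x / vhat x - d * vhat'' x) →
        Tendsto vhat atBot (𝓝 vm) →
        Tendsto vhat atTop (𝓝 vp) →
        Tendsto vhat' atBot (𝓝 0) →
        Tendsto vhat' atTop (𝓝 0) →
        StrictAnti vhat := by
  have hp'cont : ContinuousOn p' (Ioi 0) := fun s hs =>
    (hp''d s hs).continuousAt.continuousWithinAt
  have hpcont : ContinuousOn p (Ioi 0) := fun s hs =>
    (hp'd s hs).continuousAt.continuousWithinAt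
  have hp'mono : MonotoneOn p' (Ioi 0) :=
    monotoneOn_of_hasDerivWithinAt_nonneg (convex_Ioi 0) hp'cont
      (fun s hs => (hp''d s (interior_subset hs)).hasDerivWithinAt)
      fun s hs => (hp''pos s (interior_subset hs)).le
  have hpconv : ConvexOn ℝ (Ioi 0) p :=
    convexOn_of_hasDerivWithinAt2_nonneg (convex_Ioi 0) hpcont
      (fun s hs => (hp'd s (interior_subset hs)).hasDerivWithinAt)
      (fun s hs => (hp''d s (interior_subset hs)).hasDerivWithinAt)
      fun s hs => (hp''pos s (interior_subset hs)).le
  have hmvt : ∀ s t, 0 < s → s < t → ∃ ξ ∈ Ioo s t, p t - p s = p' ξ * (t - s) := by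
    intro s t hs hst
    obtain ⟨ξ, hξ, h⟩ := exists_hasDerivAt_eq_slope p p' hst
      (hpcont.mono fun x hx => hs.trans_le hx.1) fun x hx => hp'd x (hs.trans hx.1)
    exact ⟨ξ, hξ, by rw [h, div_mul_cancel₀ _ (sub_pos.2 hst).ne']⟩
  have hlim : Tendsto (fun ξ => 1 - p' vm / p' ξ) (𝓝 vm) (𝓝 0) := by
    have h := ((tendsto_const_nhds (x := p' vm)).div (hp''d vm hvm).continuousAt.tendsto
      (hp'neg vm hvm).ne).const_sub 1
    rwa [div_self (hp'neg vm hvm).ne, sub_self] at h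
  have hthr : 0 < 1 / (4 * d * vm ^ 2) := by positivity
  obtain ⟨ε₀, hε₀, hball⟩ := Metric.eventually_nhds_iff.1 (hlim.eventually (gt_mem_nhds hthr))
  refine ⟨ε₀, hε₀, ?_⟩
  intro vp a hvp hlt hamp ha v w w' hpos hv hw hode hbot htop _ hwtop
  obtain ⟨ξ, hξ, hpξ⟩ := hmvt vp vm hvp hlt
  have hξneg : p' ξ < 0 := hp'neg ξ (hvp.trans hξ.1)
  have haξ : a = -1 / p' ξ := by
    have : vm - vp ≠ 0 := (sub_pos.2 hlt).ne'
    have h1 : p vp - p vm = -(p' ξ * (vm - vp)) := by linarith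
    have h2 := hξneg.ne
    rw [ha, h1]
    field_simp
    ring
  have hapos : 0 < a := by rw [haξ]; exact div_pos_of_neg_of_neg (by norm_num) hξneg
  have haξ1 : a * p' ξ = -1 := by rw [haξ, div_mul_cancel₀ _ hξneg.ne]
  have hRH : vp - vm + a * (p vp - p vm) = 0 := by
    linear_combination -a * hpξ - (vm - vp) * haξ1
  have hγ : 1 + a * p' vm ≤ 1 / (4 * d * vm ^ 2) := by
    have h := hball (y := ξ) (by rw [Real.dist_eq, abs_lt]; constructor <;> linarith [hξ.1, hξ.2])
    have e : 1 + a * p' vm = 1 - p' vm / p' ξ := by rw [haξ]; ring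
    rw [e]
    exact h.le
  refine strictAnti_of_heteroclinic (g := fun s => s - vm + a * (p s - p vm))
    (g' := fun s => 1 + a * p' s) hd hvp hlt ?_ ?_ hRH ?_ ?_ hγ hpos hv hw ?_ hbot htop hwtop
  · intro s hs
    exact ((hasDerivAt_id s).sub_const vm).add (((hp'd s hs).sub_const (p vm)).const_mul a)
  · exact continuousOn_const.add (continuousOn_const.mul hp'cont)
  · intro s h1 h2
    have h3 := hpconv.2 (mem_Ioi.2 hvp) (mem_Ioi.2 hvm)
      (div_nonneg (sub_nonneg.2 h2.le) (sub_nonneg.2 hlt.le))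
      (div_nonneg (sub_nonneg.2 h1.le) (sub_nonneg.2 hlt.le))
      (by have := (sub_pos.2 hlt).ne'; field_simp; ring)
    have hne := (sub_pos.2 hlt).ne'
    simp only [smul_eq_mul] at h3
    have e1 : (vm - s) / (vm - vp) * vp + (s - vp) / (vm - vp) * vm = s := by field_simp; ring
    have e2 : (vm - s) / (vm - vp) * p vp + (s - vp) / (vm - vp) * p vm
        = p vm - p' ξ * (vm - s) := by
      have : p vp = p vm - p' ξ * (vm - vp) := by linarith
      rw [this]; field_simp; ring
    rw [e1, e2] at h3
    have h4 := mul_le_mul_of_nonneg_left h3 hapos.le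
    linear_combination h4 - (vm - s) * haξ1
  · intro s h1 h2
    obtain ⟨η, hη, hpη⟩ := hmvt s vm (hvp.trans h1) h2
    have h3 : p' η ≤ p' vm := hp'mono (hvp.trans (h1.trans hη.1)) hvm hη.2.le
    have h4 : a * ((vm - s) * p' η) ≤ a * ((vm - s) * p' vm) := by
      have := (sub_pos.2 h2).le
      gcongr
    linear_combination h4 + a * hpη
  · intro x
    linear_combination hode x
end

section
/- Let p : (0,∞) → ℝ be C² with p′ < 0 and p″ > 0, let 0 < v₊ < v₋, let a = −(v₊ − v₋)/(p(v₊) − p(v₋)), assume 1 + a p′(v₋) > 0, and set d_* = 1/(4 v₋²(1 + a p′(v₋))). If 0 ≤ d ≤ d_*, then every shock profile v̂ (C² solution of v̂ − v₋ + a(p(v̂) − p(v₋)) = v̂′/v̂ − d v̂″ with v̂(−∞) = v₋, v̂(+∞) = v₊, v̂′(±∞) = 0) is monotone, i.e. v̂′(x) < 0 for all x ∈ ℝ. -/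
open Filter Topology Set

/-- Grönwall comparison: if `B φ ≤ φ'` on `[a, b]`, then a positive multiple of `φ a` bounds `φ b`
from below. -/
lemma exists_pos_mul_le_of_mul_le_deriv {φ φ' B : ℝ → ℝ} {a b : ℝ} (hab : a ≤ b)
    (hB : Continuous B) (hφ : ∀ x, HasDerivAt φ (φ' x) x)
    (h : ∀ x ∈ Icc a b, B x * φ x ≤ φ' x) : ∃ e > 0, e * φ a ≤ φ b := by
  have hI : ∀ x, HasDerivAt (fun t => ∫ s in a..t, B s) (B x) x := fun x =>
    intervalIntegral.integral_hasDerivAt_right (hB.intervalIntegrable _ _)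
      (hB.stronglyMeasurableAtFilter _ _) hB.continuousAt
  have hψ : ∀ x, HasDerivAt (fun t => φ t * Real.exp (-∫ s in a..t, B s))
      (φ' x * Real.exp (-∫ s in a..x, B s) +
        φ x * (Real.exp (-∫ s in a..x, B s) * -B x)) x := fun x =>
    (hφ x).mul (hI x).neg.exp
  have hmono : MonotoneOn (fun t => φ t * Real.exp (-∫ s in a..t, B s)) (Icc a b) := by
    refine monotoneOn_of_hasDerivWithinAt_nonneg (convex_Icc a b)
      (fun x _ => (hψ x).continuousAt.continuousWithinAt)
      (fun x _ => (hψ x).hasDerivWithinAt) (fun x hx => ?_)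
    have := mul_nonneg (sub_nonneg.2 (h x (interior_subset hx)))
      (Real.exp_pos (-∫ s in a..x, B s)).le
    linarith
  have key := hmono (left_mem_Icc.2 hab) (right_mem_Icc.2 hab) hab
  simp only [intervalIntegral.integral_same, neg_zero, Real.exp_zero, mul_one] at key
  refine ⟨Real.exp (∫ s in a..b, B s), Real.exp_pos _, ?_⟩
  calc _ ≤ Real.exp (∫ s in a..b, B s) * (φ b * Real.exp (-∫ s in a..b, B s)) := by gcongr
    _ = φ b := by
      rw [mul_left_comm, ← Real.exp_add, add_neg_cancel, Real.exp_zero, mul_one]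

/-- If `f` vanishes at `c`, is continuous on `(0, ∞)` and differentiable at `c`, then along a
positive continuous `v` the function `f ∘ v` is a continuous multiple of `v - c`. -/
lemma exists_continuous_eq_mul_sub {f v : ℝ → ℝ} {c : ℝ} (hc : 0 < c)
    (hf : ∀ x ∈ Ioi (0:ℝ), DifferentiableAt ℝ f x) (hfc : f c = 0)
    (hv : Continuous v) (hpos : ∀ x, 0 < v x) :
    ∃ G : ℝ → ℝ, Continuous G ∧ ∀ x, f (v x) = G x * (v x - c) := by
  refine ⟨fun x => dslope f c (v x), ?_, fun x => ?_⟩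
  · have : ContinuousOn (dslope f c) (Ioi 0) := by
      rw [continuousOn_dslope (Ioi_mem_nhds hc)]
      exact ⟨fun x hx => (hf x hx).continuousAt.continuousWithinAt, hf c hc⟩
    exact this.comp_continuous hv hpos
  · have := sub_smul_dslope f c (v x)
    rw [hfc, sub_zero, smul_eq_mul] at this
    rw [← this, mul_comm]

/-- A continuous function which is nonzero everywhere and positive somewhere is positive. -/
lemma pos_of_continuous_of_ne_zero {h : ℝ → ℝ} (hc : Continuous h) (h0 : ∀ x, h x ≠ 0)
    {y : ℝ} (hy : 0 < h y) (x : ℝ) : 0 < h x := by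
  by_contra! hx
  obtain ⟨z, hz⟩ := mem_range_of_exists_le_of_exists_ge hc ⟨x, hx⟩ ⟨y, hy.le⟩
  exact h0 z hz

/-- Monotonicity of the profiles in the absence of capillarity. -/
lemma profile_deriv_neg_of_first_order {f v v' : ℝ → ℝ} {vp vm : ℝ}
    (hvp : 0 < vp) (hvlt : vp < vm)
    (hf : ∀ x ∈ Ioi (0:ℝ), DifferentiableAt ℝ f x) (hfp : f vp = 0) (hfm : f vm = 0)
    (hfneg : ∀ x ∈ Ioo vp vm, f x < 0)
    (hpos : ∀ x, 0 < v x) (hv : ∀ x, HasDerivAt v (v' x) x)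
    (hode : ∀ x, v' x = v x * f (v x))
    (hlim_m : Tendsto v atBot (𝓝 vm)) (hlim_p : Tendsto v atTop (𝓝 vp)) (x : ℝ) :
    v' x < 0 := by
  have hvc : Continuous v := continuous_iff_continuousAt.2 fun x => (hv x).continuousAt
  obtain ⟨G, hG, hGe⟩ := exists_continuous_eq_mul_sub hvp hf hfp hvc hpos
  obtain ⟨H, hH, hHe⟩ := exists_continuous_eq_mul_sub (hvp.trans hvlt) hf hfm hvc hpos
  obtain ⟨b, hb, hxb⟩ := ((hlim_p.eventually_lt_const hvlt).and (eventually_ge_atTop x)).exists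
  obtain ⟨c, hc, hcx⟩ := ((hlim_m.eventually_const_lt hvlt).and (eventually_le_atBot x)).exists
  obtain ⟨e, he, h1⟩ := exists_pos_mul_le_of_mul_le_deriv (φ := fun t => v t - vm) hxb
    (hvc.mul hH) (fun t => (hv t).sub_const vm)
    (fun t _ => by rw [hode, hHe]; exact (mul_assoc _ _ _).le)
  obtain ⟨e', he', h2⟩ := exists_pos_mul_le_of_mul_le_deriv (φ := fun t => v t - vp) hcx
    (hvc.mul hG) (fun t => (hv t).sub_const vp)
    (fun t _ => by rw [hode, hGe]; exact (mul_assoc _ _ _).le)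
  have h3 : v x - vm < 0 := by
    by_contra! h
    have := mul_nonneg he.le h
    linarith
  have h4 : 0 < v x - vp := (mul_pos he' (sub_pos.2 hc)).trans_le h2
  rw [hode]
  exact mul_neg_of_pos_of_neg (hpos x) (hfneg _ ⟨by linarith, by linarith⟩)

/-- If the profile stays below `vm` to the right of `x`, then `(v - vp) v'` is negative at `x`. -/
lemma profile_sub_mul_deriv_neg {f v w w' : ℝ → ℝ} {vp vm d : ℝ}
    (hvp : 0 < vp) (hvlt : vp < vm) (hd : 0 < d)
    (hf : ∀ x ∈ Ioi (0:ℝ), DifferentiableAt ℝ f x) (hfp : f vp = 0)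
    (hfsign : ∀ x, 0 < x → x < vm → (x - vp) * f x ≤ 0)
    (hpos : ∀ x, 0 < v x) (hv : ∀ x, HasDerivAt v (w x) x) (hw : ∀ x, HasDerivAt w (w' x) x)
    (hode : ∀ x, f (v x) = w x / v x - d * w' x)
    (hlim_m : Tendsto v atBot (𝓝 vm)) (hlim_p : Tendsto v atTop (𝓝 vp)) {x : ℝ}
    (hx : ∀ y, x ≤ y → v y < vm) : (v x - vp) * w x < 0 := by
  have hvc : Continuous v := continuous_iff_continuousAt.2 fun x => (hv x).continuousAt
  by_contra! hcon
  have hnonneg : ∀ y, x ≤ y → 0 ≤ (v y - vp) * w y := by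
    intro y hxy
    obtain ⟨e, he, h⟩ := exists_pos_mul_le_of_mul_le_deriv (φ := fun t => (v t - vp) * w t)
      (B := fun t => 1 / (d * v t)) hxy
      (continuous_const.div (continuous_const.mul hvc) fun t => (mul_pos hd (hpos t)).ne')
      (fun t => ((hv t).sub_const vp).mul (hw t)) (fun t ht => by
        have h1 := hfsign (v t) (hpos t) (hx t ht.1)
        have h2 : w' t = (w t / v t - f (v t)) / d := by
          rw [hode]; field_simp; ring
        have h3 : w t * w t + (v t - vp) * w' t - 1 / (d * v t) * ((v t - vp) * w t)
            = w t * w t + -((v t - vp) * f (v t)) / d := by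
          have := (hpos t).ne'
          rw [h2]; field_simp; ring
        have h4 : 0 ≤ -((v t - vp) * f (v t)) / d := div_nonneg (by linarith) hd.le
        have := mul_self_nonneg (w t)
        linarith)
    exact (mul_nonneg he.le hcon).trans h
  have hsq : MonotoneOn (fun t => (v t - vp) ^ 2) (Ici x) := by
    have hder : ∀ t, HasDerivAt (fun t => (v t - vp) ^ 2) (2 * (v t - vp) * w t) t := fun t => by
      simpa using ((hv t).sub_const vp).fun_pow 2
    refine monotoneOn_of_hasDerivWithinAt_nonneg (convex_Ici x)
      (fun t _ => (hder t).continuousAt.continuousWithinAt)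
      (fun t _ => (hder t).hasDerivWithinAt) (fun t ht => ?_)
    have := hnonneg t (interior_subset ht : t ∈ Ici x)
    linarith
  have heq : ∀ y, x ≤ y → v y = vp := by
    intro y hxy
    have hl : Tendsto (fun t => (v t - vp) ^ 2) atTop (𝓝 0) := by
      simpa using (hlim_p.sub_const vp).pow 2
    have := ge_of_tendsto hl ((eventually_ge_atTop y).mono fun t ht =>
      hsq hxy (hxy.trans ht : x ≤ t) ht)
    have := pow_eq_zero_iff two_ne_zero |>.1 (le_antisymm this (sq_nonneg _))
    linarith
  have hw0 : w (x + 1) = 0 := by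
    refine (hv (x + 1)).unique ((hasDerivAt_const (x + 1) vp).congr_of_eventuallyEq ?_)
    filter_upwards [Ioi_mem_nhds (lt_add_one x)] with t ht using heq t (le_of_lt ht)
  obtain ⟨G, hG, hGe⟩ := exists_continuous_eq_mul_sub hvp hf hfp hvc hpos
  obtain ⟨c, hc, hcx⟩ :=
    ((hlim_m.eventually_const_lt hvlt).and (eventually_le_atBot (x + 1))).exists
  obtain ⟨e, he, h⟩ := exists_pos_mul_le_of_mul_le_deriv
    (φ := fun t => (v t - vp) * (v t - vp) + w t * w t)
    (B := fun t => -(1 + |G t| / d)) hcx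
    (continuous_const.add (hG.abs.div_const d)).neg
    (fun t => (((hv t).sub_const vp).mul ((hv t).sub_const vp)).add ((hw t).mul (hw t)))
    (fun t _ => by
      have h2 : w' t = (w t / v t - G t * (v t - vp)) / d := by
        rw [← hGe, hode]; field_simp; ring
      have h3 : 0 ≤ w t * w t / v t / d :=
        div_nonneg (div_nonneg (mul_self_nonneg _) (hpos t).le) hd.le
      set h := v t - vp
      have h4 : 0 ≤ (|G t| * (h * h + w t * w t) - 2 * (G t * (h * w t))) / d := by
        refine div_nonneg ?_ hd.le
        have : G t * (h * w t) ≤ |G t| * |h * w t| := by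
          rw [← abs_mul]; exact le_abs_self _
        have h5 : 2 * |h * w t| ≤ h * h + w t * w t := by
          rw [abs_mul]
          nlinarith [sq_nonneg (|h| - |w t|), abs_mul_abs_self h, abs_mul_abs_self (w t)]
        nlinarith [mul_le_mul_of_nonneg_left h5 (abs_nonneg (G t))]
      have h6 : w t * h + h * w t + (w' t * w t + w t * w' t)
          - -(1 + |G t| / d) * (h * h + w t * w t)
          = (h + w t) ^ 2 + 2 * (w t * w t / v t / d)
            + (|G t| * (h * h + w t * w t) - 2 * (G t * (h * w t))) / d := by
        rw [h2]; ring
      nlinarith [sq_nonneg (h + w t)])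
  simp only [hw0, heq (x + 1) (by linarith), sub_self, mul_zero, add_zero] at h
  have : 0 < (v c - vp) * (v c - vp) + w c * w c := by
    nlinarith [mul_pos (sub_pos.2 hc) (sub_pos.2 hc), mul_self_nonneg (w c)]
  exact absurd h (mul_pos he this).not_ge

/-- Below the critical capillarity, the profile stays strictly below its left end state. -/
lemma profile_lt_left_state {f v w w' : ℝ → ℝ} {vp vm d c : ℝ}
    (hvp : 0 < vp) (hvlt : vp < vm) (hd : 0 < d) (hdc : 4 * d * vm ^ 2 * c ≤ 1)
    (htan : ∀ x, 0 < x → x ≤ vm → c * (x - vm) ≤ f x)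
    (hpos : ∀ x, 0 < v x) (hv : ∀ x, HasDerivAt v (w x) x) (hw : ∀ x, HasDerivAt w (w' x) x)
    (hode : ∀ x, f (v x) = w x / v x - d * w' x)
    (hlim_p : Tendsto v atTop (𝓝 vp)) (hlimd_p : Tendsto w atTop (𝓝 0)) (x : ℝ) :
    v x < vm := by
  have hvm : 0 < vm := hvp.trans hvlt
  have hvc : Continuous v := continuous_iff_continuousAt.2 fun x => (hv x).continuousAt
  by_contra! hx
  set S := {t | vm ≤ v t}
  obtain ⟨M, hM⟩ := eventually_atTop.1 (hlim_p.eventually_lt_const hvlt)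
  have hbdd : BddAbove S := ⟨M, fun t ht => le_of_not_gt fun h => (hM t h.le).not_ge ht⟩
  have hyS : sSup S ∈ S := (isClosed_le continuous_const hvc).csSup_mem ⟨x, hx⟩ hbdd
  set y := sSup S
  have hlt : ∀ t, y < t → v t < vm := fun t ht => by
    by_contra! h
    exact (le_csSup hbdd h).not_gt ht
  have hyle : v y ≤ vm := le_of_tendsto (hvc.continuousWithinAt (s := Ioi y) (x := y))
    (eventually_mem_nhdsWithin.mono fun t ht => (hlt t ht).le)
  have hvy : v y = vm := le_antisymm hyle hyS
  have hle : ∀ t, y ≤ t → v t ≤ vm := fun t ht => by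
    rcases ht.eq_or_lt with rfl | h
    exacts [hyle, (hlt t h).le]
  have hwy : w y ≤ 0 := by
    refine le_of_tendsto (hasDerivAt_iff_tendsto_slope.1 (hv y) |>.mono_left
      (nhdsWithin_mono y fun t (ht : t ∈ Ioi y) => (ne_of_gt ht : t ≠ y)))
      (eventually_mem_nhdsWithin.mono fun t (ht : y < t) => ?_)
    rw [slope_def_field, hvy]
    exact div_nonpos_of_nonpos_of_nonneg (by linarith [hlt t ht]) (by linarith)
  set k := 1 / (2 * d * vm) with hk
  have hk0 : 0 < k := by positivity
  have hlim : Tendsto (fun t => (v t - vm) * k - w t) atTop (𝓝 ((vp - vm) * k - 0)) :=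
    ((hlim_p.sub_const vm).mul_const k).sub hlimd_p
  have hneg : (vp - vm) * k - 0 < 0 := by
    rw [sub_zero]; exact mul_neg_of_neg_of_pos (by linarith) hk0
  obtain ⟨b, hb, hyb⟩ := ((hlim.eventually_lt_const hneg).and (eventually_ge_atTop y)).exists
  obtain ⟨e, he, h⟩ := exists_pos_mul_le_of_mul_le_deriv (φ := fun t => (v t - vm) * k - w t)
    (B := fun t => 1 / (v t * d) - k) hyb
    ((continuous_const.div (hvc.mul continuous_const)
      fun t => (mul_pos (hpos t) hd).ne').sub continuous_const)
    (fun t => (((hv t).sub_const vm).mul_const k).sub (hw t))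
    (fun t ht => by
      have hvt := hpos t
      have hu := hle t ht.1
      have h1 := htan (v t) hvt hu
      have h2 : w' t = (w t / v t - f (v t)) / d := by
        rw [hode]; field_simp; ring
      have h3 : w t * k - w' t - (1 / (v t * d) - k) * ((v t - vm) * k - w t)
          = (f (v t) - c * (v t - vm)) / d
            + (vm - v t) * (k / (v t * d) - k * k - c / d) := by
        rw [h2]; field_simp; ring
      have h4 : 0 ≤ (f (v t) - c * (v t - vm)) / d := div_nonneg (by linarith) hd.le
      have h5 : k / (vm * d) ≤ k / (v t * d) := by gcongr
      have h6 : k / (vm * d) - k * k - c / d = (1 - 4 * d * vm ^ 2 * c) / (4 * d ^ 2 * vm ^ 2) := by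
        rw [hk]; field_simp; ring
      have h7 : 0 ≤ (1 - 4 * d * vm ^ 2 * c) / (4 * d ^ 2 * vm ^ 2) :=
        div_nonneg (by linarith) (by positivity)
      have h8 : 0 ≤ (vm - v t) * (k / (v t * d) - k * k - c / d) :=
        mul_nonneg (by linarith) (by linarith)
      linarith)
  simp only [hvy, sub_self, zero_mul, zero_sub] at h
  have := mul_nonneg he.le (neg_nonneg.2 hwy)
  linarith

/-- If `0 ≤ d ≤ d_* = 1/(4 vm² (1 + a p'(vm)))`, then every shock
profile of Slemrod's model is monotone: `vhat'(x) < 0` for all `x`. -/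
theorem monotone_below_dstar
    (p p' p'' : ℝ → ℝ)
    (hp'd : ∀ v ∈ Ioi (0:ℝ), HasDerivAt p (p' v) v)
    (hp''d : ∀ v ∈ Ioi (0:ℝ), HasDerivAt p' (p'' v) v)
    (hp''cont : ContinuousOn p'' (Ioi 0))
    (hp'neg : ∀ v ∈ Ioi (0:ℝ), p' v < 0)
    (hp''pos : ∀ v ∈ Ioi (0:ℝ), 0 < p'' v)
    (vp vm a d : ℝ)
    (hvp : 0 < vp) (hvlt : vp < vm)
    (ha : a = -(vp - vm) / (p vp - p vm))
    (hb : 0 < 1 + a * p' vm)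
    (dstar : ℝ) (hdstar : dstar = 1 / (4 * vm ^ 2 * (1 + a * p' vm)))
    (hd0 : 0 ≤ d) (hdle : d ≤ dstar)
    (vhat vhat' vhat'' : ℝ → ℝ)
    (hpos : ∀ x, 0 < vhat x)
    (hder1 : ∀ x, HasDerivAt vhat (vhat' x) x)
    (hder2 : ∀ x, HasDerivAt vhat' (vhat'' x) x)
    (hprof : ∀ x, vhat x - vm + a * (p (vhat x) - p vm) = vhat' x / vhat x - d * vhat'' x)
    (hlim_m : Tendsto vhat atBot (𝓝 vm))
    (hlim_p : Tendsto vhat atTop (𝓝 vp))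
    (hlimd_m : Tendsto vhat' atBot (𝓝 0))
    (hlimd_p : Tendsto vhat' atTop (𝓝 0)) :
    ∀ x, vhat' x < 0 := by
  have hvm : 0 < vm := hvp.trans hvlt
  set f : ℝ → ℝ := fun v => v - vm + a * (p v - p vm) with hfdef
  have hpanti : StrictAntiOn p (Ioi 0) :=
    strictAntiOn_of_hasDerivWithinAt_neg (convex_Ioi 0)
      (fun v hv => (hp'd v hv).continuousAt.continuousWithinAt)
      (fun v hv => (hp'd v (interior_subset hv)).hasDerivWithinAt)
      (fun v hv => hp'neg v (interior_subset hv))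
  have hpp : 0 < p vp - p vm := sub_pos.2 (hpanti hvp hvm hvlt)
  have ha0 : 0 < a := by rw [ha]; exact div_pos (by linarith) hpp
  have hfder : ∀ v ∈ Ioi (0:ℝ), HasDerivAt f (1 + a * p' v) v := fun v hv =>
    ((hasDerivAt_id v).sub_const vm).add (((hp'd v hv).sub_const (p vm)).const_mul a)
  have hfm : f vm = 0 := by simp [hfdef]
  have hfp : f vp = 0 := by
    simp only [hfdef]
    rw [ha, div_mul_cancel₀ _ hpp.ne']; ring
  have hp'mono : StrictMonoOn p' (Ioi 0) :=
    strictMonoOn_of_hasDerivWithinAt_pos (convex_Ioi 0)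
      (fun v hv => (hp''d v hv).continuousAt.continuousWithinAt)
      (fun v hv => (hp''d v (interior_subset hv)).hasDerivWithinAt)
      (fun v hv => hp''pos v (interior_subset hv))
  have hconv : StrictConvexOn ℝ (Ioi 0) f := by
    refine StrictMonoOn.strictConvexOn_of_deriv (convex_Ioi 0)
      (fun v hv => (hfder v hv).continuousAt.continuousWithinAt) ?_
    rw [interior_Ioi]
    intro x hx y hy hxy
    rw [(hfder x hx).deriv, (hfder y hy).deriv]
    have := mul_lt_mul_of_pos_left (hp'mono hx hy hxy) ha0
    linarith
  have hfneg : ∀ x ∈ Ioo vp vm, f x < 0 := by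
    intro x hx
    have hx0 : 0 < x := hvp.trans hx.1
    have := hconv.slope_strict_mono_adjacent (x := vp) (y := x) (z := vm) hvp hvm hx.1 hx.2
    rw [hfp, hfm, div_lt_div_iff₀ (sub_pos.2 hx.1) (sub_pos.2 hx.2)] at this
    nlinarith [hx.1, hx.2]
  have hfsign : ∀ x, 0 < x → x < vm → (x - vp) * f x ≤ 0 := by
    intro x hx0 hx
    rcases lt_trichotomy x vp with h | rfl | h
    · have := hconv.slope_strict_mono_adjacent (x := x) (y := vp) (z := vm) hx0 hvm h hvlt
      rw [hfp, hfm, sub_zero, zero_div, zero_sub, div_neg_iff] at this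
      rcases this with h' | h'
      · linarith
      · nlinarith
    · simp
    · exact mul_nonpos_of_nonneg_of_nonpos (by linarith) (hfneg x ⟨h, hx⟩).le
  have htan : ∀ x, 0 < x → x ≤ vm → (1 + a * p' vm) * (x - vm) ≤ f x := by
    intro x hx0 hx
    rcases hx.eq_or_lt with rfl | h
    · simp [hfm]
    · have := hconv.convexOn.slope_le_of_hasDerivAt (x := x) (y := vm) hx0 hvm h (hfder vm hvm)
      rw [slope_def_field, hfm, div_le_iff₀ (sub_pos.2 h)] at this
      linarith
  have hfdiff : ∀ x ∈ Ioi (0:ℝ), DifferentiableAt ℝ f x :=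
    fun x hx => (hfder x hx).differentiableAt
  rcases hd0.eq_or_lt with rfl | hd
  · refine profile_deriv_neg_of_first_order hvp hvlt hfdiff hfp hfm hfneg hpos hder1
      (fun x => ?_) hlim_m hlim_p
    have h := hprof x
    rw [zero_mul, sub_zero, eq_div_iff (hpos x).ne'] at h
    rw [← h, mul_comm]
  · have hdc : 4 * d * vm ^ 2 * (1 + a * p' vm) ≤ 1 := by
      rw [hdstar, le_div_iff₀ (by positivity)] at hdle
      linarith
    have hlt : ∀ x, vhat x < vm := profile_lt_left_state hvp hvlt hd hdc htan hpos hder1 hder2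
      hprof hlim_p hlimd_p
    have hneg : ∀ x, (vhat x - vp) * vhat' x < 0 := fun x =>
      profile_sub_mul_deriv_neg hvp hvlt hd hfdiff hfp hfsign hpos hder1 hder2 hprof
        hlim_m hlim_p fun y _ => hlt y
    obtain ⟨y, hy⟩ := (hlim_m.eventually_const_lt hvlt).exists
    have hvc : Continuous vhat := continuous_iff_continuousAt.2 fun x => (hder1 x).continuousAt
    intro x
    have hx : 0 < vhat x - vp := pos_of_continuous_of_ne_zero (h := fun t => vhat t - vp)
      (hvc.sub continuous_const) (fun t ht => (hneg t).ne (mul_eq_zero_of_left ht _)) (sub_pos.2 hy) x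
    exact (pos_iff_neg_of_mul_neg (hneg x)).1 hx
end
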